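/- For every integer k ≥ 5 and every spider T on n vertices with exactly k legs, h(T) ≥ (k − 1)(n − 1)/(4k − 6); in particular h(T) ≥ (1/4 + 1/(8k − 12))·n − 1. -/

import Mathlib

open Finset

/-- The multiset of pairwise distances between distinct vertices of `S` in `G`
(one entry for each unordered pair of distinct vertices of `S`). -/
noncomputable def distMultiset {V : Type*} (G : SimpleGraph V) (S : Finset V) : Multiset ℕ :=
  letI := Classical.decEq V
  (S.sym2.filter fun p => ¬ p.IsDiag).val.map
    (Sym2.lift ⟨fun a b => G.dist a b, fun _ _ => SimpleGraph.dist_comm⟩)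

/-- Two disjoint vertex sets are homometric if their distance multisets coincide. -/
def Homometric {V : Type*} (G : SimpleGraph V) (S₁ S₂ : Finset V) : Prop :=
  Disjoint S₁ S₂ ∧ distMultiset G S₁ = distMultiset G S₂

/-- `h(G)`: the largest `h` such that `G` contains two disjoint homometric sets of
size `h` each. -/
noncomputable def homNumber {V : Type*} (G : SimpleGraph V) : ℕ :=
  sSup {h : ℕ | ∃ S₁ S₂ : Finset V, Homometric G S₁ S₂ ∧ S₁.card = h ∧ S₂.card = h}

/-- A spider with head `v` and `k` legs: a tree in which `v` has degree `k` and every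
other vertex has degree at most `2`.  (The components of `T − v` are then exactly `k`
vertex-disjoint paths, each joined to `v` by one edge at an endpoint.) -/
def IsSpider {V : Type*} [Fintype V] (G : SimpleGraph V) [DecidableRel G.Adj]
    (v : V) (k : ℕ) : Prop :=
  G.IsTree ∧ G.degree v = k ∧ ∀ u, u ≠ v → G.degree u ≤ 2

/-!
List the legs in decreasing order of size, `l 0 ≥ l 1 ≥ ⋯`, and write `H` for `h(G)`. Two bounds on
`H` compete. The two longest legs form with the head a geodesic on `l 0 + l 1 + 1` vertices, and two
consecutive halves of a geodesic are homometric; hence `l 0 + l 1 ≤ 2 H`. On the other hand one may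
pair the legs `2 t` and `2 t + 1`: the whole leg `2 t + 1` and the part of leg `2 t` that lies
equally close to the head have the same distances, also across different pairs, because distances
between legs only depend on the distances to the head. Hence `l 1 + l 3 + ⋯ ≤ H`, and so
`n - 1 ≤ l 0 + 2 H`. The first bound is good when the two longest legs dominate, the second when
`l 0` is small; together with `n - 1 ≤ l 0 + (k - 1) l 1` they give the estimate.
-/

section Homometric

variable {V α : Type*} {G : SimpleGraph V}

theorem distMultiset_map [DecidableEq α] (s : Finset α) (e : α ↪ V) :
    distMultiset G (s.map e) = (s.sym2.filter fun p => ¬ p.IsDiag).val.map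
      (Sym2.lift ⟨fun a b => G.dist (e a) (e b), fun _ _ => SimpleGraph.dist_comm⟩) := by
  classical
  have hfilter : ((s.map e).sym2.filter fun p => ¬ p.IsDiag) =
      (s.sym2.filter fun p => ¬ p.IsDiag).map e.sym2Map := by
    rw [sym2_map, filter_map]
    congr 1
    refine filter_congr fun p _ => ?_
    simp [Function.Embedding.sym2Map, Sym2.isDiag_map e.injective]
  unfold distMultiset
  convert congrArg (fun t : Finset (Sym2 V) => t.val.map
    (Sym2.lift ⟨fun a b => G.dist a b, fun _ _ => SimpleGraph.dist_comm⟩)) hfilter using 1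
  rw [map_val, Multiset.map_map]
  refine Multiset.map_congr rfl fun p _ => ?_
  induction p using Sym2.ind with | _ a b => rfl

theorem homometric_map {s : Finset α} {e₁ e₂ : α ↪ V} (hne : ∀ a ∈ s, ∀ b ∈ s, e₁ a ≠ e₂ b)
    (hdist : ∀ a ∈ s, ∀ b ∈ s, G.dist (e₁ a) (e₁ b) = G.dist (e₂ a) (e₂ b)) :
    Homometric G (s.map e₁) (s.map e₂) := by
  classical
  constructor
  · simp only [disjoint_left, mem_map]
    rintro _ ⟨a, ha, rfl⟩ ⟨b, hb, hab⟩
    exact hne a ha b hb hab.symm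
  · rw [distMultiset_map, distMultiset_map]
    refine Multiset.map_congr rfl fun p hp => ?_
    induction p using Sym2.ind with | _ a b =>
    have hab := mk_mem_sym2_iff.1 (mem_filter.1 hp).1
    exact hdist a hab.1 b hab.2

theorem Homometric.card_le_homNumber [Finite V] {S₁ S₂ : Finset V} (h : Homometric G S₁ S₂)
    (hcard : #S₁ = #S₂) : #S₁ ≤ homNumber G := by
  have := Fintype.ofFinite V
  refine le_csSup ⟨Fintype.card V, ?_⟩ ⟨S₁, S₂, h, rfl, hcard.symm⟩
  rintro _ ⟨S, -, -, rfl, -⟩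
  exact card_le_univ S

theorem card_le_homNumber [Finite V] [Fintype α] (hG : G.Connected) {e₁ e₂ : α → V}
    (he₁ : Function.Injective e₁) (hne : ∀ a b, e₁ a ≠ e₂ b)
    (hdist : ∀ a b, G.dist (e₁ a) (e₁ b) = G.dist (e₂ a) (e₂ b)) :
    Fintype.card α ≤ homNumber G := by
  have he₂ : Function.Injective e₂ := fun a b hab =>
    he₁ (hG.dist_eq_zero_iff.1 ((hdist a b).trans (hG.dist_eq_zero_iff.2 hab)))
  have h : Homometric G (univ.map ⟨e₁, he₁⟩) (univ.map ⟨e₂, he₂⟩) :=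
    homometric_map (fun a _ b _ => hne a b) fun a _ b _ => hdist a b
  simpa only [card_map, card_univ] using h.card_le_homNumber (by simp only [card_map])

end Homometric

section Walks

open SimpleGraph

variable {V : Type*} {G : SimpleGraph V} {u v w : V}

theorem dist_getVert_getVert {p : G.Walk u v} (hp : p.length = G.dist u v) {i j : ℕ}
    (hi : i ≤ p.length) (hj : j ≤ p.length) :
    G.dist (p.getVert i) (p.getVert j) = Nat.dist i j := by
  wlog hij : i ≤ j generalizing i j
  · rw [dist_comm, Nat.dist_comm, this hj hi (le_of_not_ge hij)]
  have hsub : ((p.drop i).take (j - i)).IsSubwalk p :=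
    ((p.drop i).isSubwalk_take _).trans (p.isSubwalk_drop i)
  have h := length_eq_dist_of_subwalk hp hsub
  simp only [Walk.take_length, Walk.drop_length, Walk.drop_getVert, Nat.add_sub_cancel' hij] at h
  rw [← h, Nat.dist_eq_sub_of_le hij, min_eq_left (Nat.sub_le_sub_right hj i)]

theorem length_eq_dist_of_isPath (hG : G.IsAcyclic) {p : G.Walk u v} (hp : p.IsPath) :
    p.length = G.dist u v := by
  obtain ⟨q, hq, hlen⟩ := p.reachable.exists_path_of_dist
  have hpq : (⟨p, hp⟩ : G.Path u v) = ⟨q, hq⟩ := (hG.subsingleton_path u v).elim _ _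
  obtain rfl : p = q := congrArg Subtype.val hpq
  exact hlen

theorem isPath_reverse_append (hG : G.IsAcyclic) {p : G.Walk v u} {q : G.Walk v w}
    (hp : p.IsPath) (hq : q.IsPath) (hsnd : p.snd ≠ q.snd) : (p.reverse.append q).IsPath := by
  -- In an acyclic graph a walk is a path as soon as it never backtracks along an edge.
  rw [hG.isPath_iff_isChain, Walk.edges_append, List.isChain_append]
  refine ⟨(hG.isPath_iff_isChain _).1 hp.reverse, (hG.isPath_iff_isChain _).1 hq, ?_⟩
  rw [Walk.edges_reverse, List.getLast?_reverse]
  rcases p with _ | ⟨_, p⟩ <;> rcases q with _ | ⟨_, q⟩ <;> simp_all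

theorem dist_getVert_getVert_of_snd_ne (hG : G.IsAcyclic) {p : G.Walk v u} {q : G.Walk v w}
    (hp : p.IsPath) (hq : q.IsPath) (hsnd : p.snd ≠ q.snd) {i j : ℕ}
    (hi : i ≤ p.length) (hj : j ≤ q.length) :
    G.dist (p.getVert i) (q.getVert j) = i + j := by
  set r := p.reverse.append q with hr
  have hlen : r.length = p.length + q.length := by
    rw [hr, Walk.length_append, Walk.length_reverse]
  have hri : r.getVert (p.length - i) = p.getVert i := by
    rw [hr, Walk.getVert_append', Walk.length_reverse,
      if_pos (Nat.sub_le _ _), Walk.getVert_reverse, Nat.sub_sub_self hi]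
  have hrj : r.getVert (p.length + j) = q.getVert j := by
    rw [hr, Walk.getVert_append, Walk.length_reverse,
      if_neg (Nat.le_add_right _ _).not_gt, Nat.add_sub_cancel_left]
  have hdist : r.length = G.dist u w :=
    length_eq_dist_of_isPath hG (isPath_reverse_append hG hp hq hsnd)
  rw [← hri, ← hrj, dist_getVert_getVert hdist (by omega) (by omega),
    Nat.dist_eq_sub_of_le (by omega)]
  omega

theorem length_add_one_div_two_le_homNumber [Finite V] (hG : G.Connected) {p : G.Walk u v}
    (hp : p.length = G.dist u v) : (p.length + 1) / 2 ≤ homNumber G := by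
  set m := (p.length + 1) / 2
  have hlt : ∀ i : Fin m, m + i ≤ p.length := fun i => by omega
  have hinj := (p.isPath_of_length_eq_dist hp).getVert_injOn
  have h := card_le_homNumber hG (e₁ := fun i : Fin m => p.getVert i)
    (e₂ := fun i : Fin m => p.getVert (m + i)) ?_ ?_ ?_
  · rwa [Fintype.card_fin] at h
  · exact fun i j hij => Fin.ext (hinj (by grind) (by grind) hij)
  · exact fun i j hij => absurd (hinj (by grind) (hlt j) hij) (by omega)
  · intro i j
    rw [dist_getVert_getVert hp (by grind) (by grind), dist_getVert_getVert hp (hlt i) (hlt j),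
      Nat.dist_add_add_left]

theorem sum_length_le_homNumber [Finite V] (hG : G.IsTree) {τ : Type*} [Fintype τ] {x y : τ → V}
    {p : ∀ t, G.Walk v (x t)} {q : ∀ t, G.Walk v (y t)}
    (hp : ∀ t, (p t).IsPath) (hq : ∀ t, (q t).IsPath)
    (hpp : Function.Injective fun t => (p t).snd) (hqq : Function.Injective fun t => (q t).snd)
    (hpq : ∀ s t, (p s).snd ≠ (q t).snd) (hle : ∀ t, (q t).length ≤ (p t).length) :
    ∑ t, (q t).length ≤ homNumber G := by
  have hlt : ∀ (t : τ) (i : Fin (q t).length), i + 1 ≤ (p t).length := fun t i =>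
    i.isLt.trans_le (hle t)
  have h := card_le_homNumber hG.connected
    (e₁ := fun a : Σ t, Fin (q t).length => (p a.1).getVert (a.2 + 1))
    (e₂ := fun a => (q a.1).getVert (a.2 + 1)) ?_ ?_ ?_
  · simpa only [Fintype.card_sigma, Fintype.card_fin] using h
  · rintro ⟨s, i⟩ ⟨t, j⟩ hij
    obtain rfl : s = t := by
      by_contra hst
      have hd := dist_getVert_getVert_of_snd_ne hG.isAcyclic (hp s) (hp t) (hpp.ne hst)
        (hlt s i) (hlt t j)
      rw [hG.connected.dist_eq_zero_iff.2 hij] at hd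
      omega
    have := (hp s).getVert_injOn (hlt s i) (hlt s j) hij
    rw [Fin.ext (Nat.succ_injective this)]
  · rintro ⟨s, i⟩ ⟨t, j⟩ hij
    have hd := dist_getVert_getVert_of_snd_ne hG.isAcyclic (hp s) (hq t) (hpq s t) (hlt s i) j.isLt
    rw [hG.connected.dist_eq_zero_iff.2 hij] at hd
    omega
  · rintro ⟨s, i⟩ ⟨t, j⟩
    obtain rfl | hst := eq_or_ne s t
    · rw [dist_getVert_getVert (length_eq_dist_of_isPath hG.isAcyclic (hp s)) (hlt s i) (hlt s j),
        dist_getVert_getVert (length_eq_dist_of_isPath hG.isAcyclic (hq s)) i.isLt j.isLt]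
    · rw [dist_getVert_getVert_of_snd_ne hG.isAcyclic (hp s) (hp t) (hpp.ne hst) (hlt s i)
          (hlt t j),
        dist_getVert_getVert_of_snd_ne hG.isAcyclic (hq s) (hq t) (hqq.ne hst) i.isLt j.isLt]

end Walks

section Legs

open SimpleGraph

variable {V : Type*} {G : SimpleGraph V} {u v w x a b : V}

theorem exists_adj_dist_eq_add_one (hG : G.Connected) (h : u ≠ v) :
    ∃ w, G.Adj w u ∧ G.dist v u = G.dist v w + 1 := by
  obtain ⟨p, hp⟩ := hG.exists_walk_length_eq_dist u v
  cases p with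
  | nil => exact absurd rfl h
  | @cons _ w _ huw p =>
    refine ⟨w, huw.symm, ?_⟩
    have hle := dist_le p
    have htri : G.dist u v ≤ G.dist u w + G.dist w v := hG.dist_triangle
    rw [dist_eq_one_iff_adj.2 huw] at htri
    rw [Walk.length_cons] at hp
    rw [dist_comm (u := v), dist_comm (u := v)]
    omega

variable [Fintype V]

/-- The leg of a spider with head `v` that is attached to `v` through its neighbour `a`, encoded
for an arbitrary graph as the set of vertices that have a geodesic to `v` passing through `a`.
For `a = v` it is empty. -/
noncomputable def leg (G : SimpleGraph V) (v a : V) : Finset V :=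
  univ.filter fun u => G.dist v u = G.dist a u + 1

/-- The size of the leg at `a`, encoded as the largest distance from the head `v` to a vertex of
the leg. For `a = v` it is `0`. -/
noncomputable def legLength (G : SimpleGraph V) (v a : V) : ℕ :=
  (leg G v a).sup (G.dist v)

theorem mem_leg : u ∈ leg G v a ↔ G.dist v u = G.dist a u + 1 := by
  simp only [leg, mem_filter, mem_univ, true_and]

theorem legLength_self : legLength G v v = 0 := by
  simp only [legLength, leg, Nat.left_eq_add, one_ne_zero, filter_false, sup_empty,
    Nat.bot_eq_zero]

theorem mem_leg_self (ha : G.Adj v a) : a ∈ leg G v a := by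
  rw [mem_leg, dist_self, dist_eq_one_iff_adj.2 ha]

theorem exists_adj_mem_leg (hG : G.Connected) (h : u ≠ v) : ∃ a, G.Adj v a ∧ u ∈ leg G v a := by
  obtain ⟨a, hav, hdist⟩ := exists_adj_dist_eq_add_one hG h.symm
  refine ⟨a, hav.symm, mem_leg.2 ?_⟩
  rwa [dist_comm, dist_comm (u := a)]

theorem exists_mem_leg_adj (hG : G.Connected) (ha : G.Adj v a) (hu : u ∈ leg G v a) (hne : u ≠ a) :
    ∃ w ∈ leg G v a, G.Adj w u ∧ G.dist a u = G.dist a w + 1 := by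
  obtain ⟨w, hwu, hdist⟩ := exists_adj_dist_eq_add_one hG hne
  refine ⟨w, mem_leg.2 (le_antisymm ?_ ?_), hwu, hdist⟩
  · have htri : G.dist v w ≤ G.dist v a + G.dist a w := hG.dist_triangle
    rw [dist_eq_one_iff_adj.2 ha] at htri
    omega
  · have htri : G.dist v u ≤ G.dist v w + G.dist w u := hG.dist_triangle
    rw [dist_eq_one_iff_adj.2 hwu, mem_leg.1 hu] at htri
    omega

theorem eq_of_adj_of_dist_eq_add_one [DecidableRel G.Adj] (hG : G.Connected) (hxv : x ≠ v)
    (hdeg : G.degree x ≤ 2) (hxu : G.Adj x u) (hxw : G.Adj x w) (hu : G.dist v u = G.dist v x + 1)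
    (hw : G.dist v w = G.dist v x + 1) : u = w := by
  obtain ⟨z, hzx, hz⟩ := exists_adj_dist_eq_add_one hG hxv
  by_contra huw
  refine hdeg.not_gt (two_lt_card.2 ⟨z, ?_, u, ?_, w, ?_, ?_, ?_, huw⟩)
  · exact (G.mem_neighborFinset x z).2 hzx.symm
  · exact (G.mem_neighborFinset x u).2 hxu
  · exact (G.mem_neighborFinset x w).2 hxw
  · rintro rfl
    omega
  · rintro rfl
    omega

theorem injOn_dist_leg [DecidableRel G.Adj] (hG : G.Connected) (hdeg : ∀ u, u ≠ v → G.degree u ≤ 2)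
    (ha : G.Adj v a) : Set.InjOn (G.dist v) (leg G v a) := by
  suffices h : ∀ n, ∀ u ∈ leg G v a, ∀ w ∈ leg G v a, G.dist a u = n → G.dist a w = n → u = w by
    intro u hu w hw huw
    rw [mem_leg.1 hu, mem_leg.1 hw] at huw
    exact h _ u hu w hw rfl (Nat.succ_injective huw).symm
  intro n
  induction n with
  | zero =>
    intro u _ w _ hau haw
    rw [← hG.dist_eq_zero_iff.1 hau, hG.dist_eq_zero_iff.1 haw]
  | succ n ih =>
    intro u hu w hw hau haw
    obtain ⟨x, hx, hxu, haxu⟩ := exists_mem_leg_adj hG ha hu (by rintro rfl; simp at hau)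
    obtain ⟨y, hy, hyw, hayw⟩ := exists_mem_leg_adj hG ha hw (by rintro rfl; simp at haw)
    obtain rfl : x = y := ih x hx y hy (by omega) (by omega)
    have hvx := mem_leg.1 hx
    have hvu := mem_leg.1 hu
    have hvw := mem_leg.1 hw
    have hxv : x ≠ v := by
      rintro rfl
      rw [dist_self] at hvx
      omega
    exact eq_of_adj_of_dist_eq_add_one hG hxv (hdeg x hxv) hxu hyw (by omega) (by omega)

theorem card_leg_le_legLength (h : Set.InjOn (G.dist v) (leg G v a)) :
    #(leg G v a) ≤ legLength G v a := by
  have hmaps : ∀ u ∈ leg G v a, G.dist v u ∈ Icc 1 (legLength G v a) := fun u hu =>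
    mem_Icc.2 ⟨mem_leg.1 hu ▸ Nat.succ_pos _, le_sup (f := G.dist v) hu⟩
  simpa only [Nat.card_Icc, Nat.add_sub_cancel] using card_le_card_of_injOn _ hmaps h

theorem card_le_one_add_sum_legLength [DecidableRel G.Adj] (hG : G.Connected)
    (hdeg : ∀ u, u ≠ v → G.degree u ≤ 2) :
    Fintype.card V ≤ 1 + ∑ a ∈ G.neighborFinset v, legLength G v a := by
  classical
  have hcover : (univ : Finset V) ⊆ {v} ∪ (G.neighborFinset v).biUnion (leg G v) := by
    intro u _
    rw [mem_union, mem_singleton, mem_biUnion, or_iff_not_imp_left]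
    intro hu
    obtain ⟨a, ha, hua⟩ := exists_adj_mem_leg hG hu
    exact ⟨a, (G.mem_neighborFinset v a).2 ha, hua⟩
  calc Fintype.card V ≤ #({v} ∪ (G.neighborFinset v).biUnion (leg G v)) := card_le_card hcover
    _ ≤ #{v} + #((G.neighborFinset v).biUnion (leg G v)) := card_union_le _ _
    _ ≤ 1 + ∑ a ∈ G.neighborFinset v, #(leg G v a) := by
      rw [card_singleton]
      exact Nat.add_le_add_left card_biUnion_le 1
    _ ≤ 1 + ∑ a ∈ G.neighborFinset v, legLength G v a := by
      refine Nat.add_le_add_left (sum_le_sum fun a ha => card_leg_le_legLength ?_) 1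
      exact injOn_dist_leg hG hdeg ((G.mem_neighborFinset v a).1 ha)

theorem exists_isPath_length_eq_legLength (hG : G.Connected) (ha : G.Adj v a) :
    ∃ (u : V) (p : G.Walk v u), p.IsPath ∧ p.length = legLength G v a ∧ p.snd = a := by
  obtain ⟨u, hu, hlen⟩ := exists_mem_eq_sup (leg G v a) ⟨a, mem_leg_self ha⟩ (G.dist v)
  obtain ⟨p, hp⟩ := hG.exists_walk_length_eq_dist a u
  have hcons : (p.cons ha).length = G.dist v u := by
    rw [Walk.length_cons, hp, mem_leg.1 hu]
  exact ⟨u, p.cons ha, Walk.isPath_of_length_eq_dist _ hcons, hcons.trans hlen.symm,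
    p.snd_cons ha⟩

theorem legLength_add_legLength_le (hG : G.IsTree) (ha : G.Adj v a) (hb : G.Adj v b)
    (hab : a ≠ b) : legLength G v a + legLength G v b ≤ 2 * homNumber G := by
  obtain ⟨u, p, hp, hpa, rfl⟩ := exists_isPath_length_eq_legLength hG.connected ha
  obtain ⟨w, q, hq, hqb, rfl⟩ := exists_isPath_length_eq_legLength hG.connected hb
  have h := length_add_one_div_two_le_homNumber hG.connected
    (length_eq_dist_of_isPath hG.isAcyclic (isPath_reverse_append hG.isAcyclic hp hq hab))
  rw [Walk.length_append, Walk.length_reverse] at h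
  omega

theorem sum_legLength_le_homNumber (hG : G.IsTree) {τ : Type*} [Fintype τ] {x y : τ → V}
    (hx : ∀ t, G.Adj v (x t)) (hy : ∀ t, G.Adj v (y t)) (hxx : Function.Injective x)
    (hyy : Function.Injective y) (hxy : ∀ s t, x s ≠ y t)
    (hle : ∀ t, legLength G v (y t) ≤ legLength G v (x t)) :
    ∑ t, legLength G v (y t) ≤ homNumber G := by
  choose u p hp hpl hps using fun t => exists_isPath_length_eq_legLength hG.connected (hx t)
  choose w q hq hql hqs using fun t => exists_isPath_length_eq_legLength hG.connected (hy t)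
  simp only [← hql, ← hpl] at hle ⊢
  refine sum_length_le_homNumber hG hp hq ?_ ?_ ?_ hle
  · simpa only [hps] using hxx
  · simpa only [hqs] using hyy
  · simpa only [hps, hqs] using hxy

end Legs

section Antitone

theorem exists_bijOn_Iio_card_antitone {α β : Type*} [LinearOrder β] (s : Finset α) (f : α → β)
    {a₀ : α} (h : ∀ a ∈ s, f a₀ ≤ f a) :
    ∃ e : ℕ → α, Set.BijOn e (Set.Iio #s) s ∧ Antitone (f ∘ e) := by
  set g : Fin #s ≃ s := s.equivFin.symm
  set σ := Tuple.sort fun i => OrderDual.toDual (f (g i))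
  have hσ : Antitone fun i => f (g (σ i)) := Tuple.monotone_sort fun i => OrderDual.toDual (f (g i))
  refine ⟨fun j => if hj : j < #s then g (σ ⟨j, hj⟩) else a₀, ⟨?_, ?_, ?_⟩, ?_⟩
  · intro j hj
    simp only [dif_pos (Set.mem_Iio.1 hj)]
    exact (g _).2
  · intro i hi j hj hij
    simp only [dif_pos (Set.mem_Iio.1 hi), dif_pos (Set.mem_Iio.1 hj)] at hij
    simpa using hij
  · intro a ha
    refine ⟨σ.symm (s.equivFin ⟨a, ha⟩), Fin.isLt _, ?_⟩
    simp [g]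
  · intro i j hij
    by_cases hj : j < #s
    · simpa only [Function.comp_apply, dif_pos hj, dif_pos (hij.trans_lt hj)] using
        hσ (Fin.mk_le_mk.2 hij)
    · simp only [Function.comp_apply, dif_neg hj]
      split
      · exact h _ (g _).2
      · exact le_rfl

theorem sum_range_succ_le_add_mul {l : ℕ → ℕ} (hl : Antitone l) (q : ℕ) :
    ∑ j ∈ range (q + 1), l j ≤ l 0 + q * l 1 := by
  rw [sum_range_succ', add_comm]
  refine Nat.add_le_add_left ?_ _
  simpa only [card_range, smul_eq_mul] using
    sum_le_card_nsmul (range q) (fun j => l (j + 1)) (l 1) fun j _ => hl (Nat.le_add_left 1 j)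

theorem sum_range_le_add_two_mul_sum_odd {l : ℕ → ℕ} (hl : Antitone l) (k : ℕ) :
    ∑ j ∈ range k, l j ≤ l 0 + 2 * ∑ t ∈ range (k / 2), l (2 * t + 1) := by
  induction k using Nat.twoStepInduction generalizing l with
  | zero => simp
  | one => simp
  | more k ih _ =>
    have hshift : ∑ j ∈ range k, l (j + 1 + 1) ≤
        l 2 + 2 * ∑ t ∈ range (k / 2), l (2 * (t + 1) + 1) :=
      ih (l := fun j => l (j + 2)) fun i j hij => hl (Nat.add_le_add_right hij 2)
    have h21 : l 2 ≤ l 1 := hl one_le_two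
    rw [sum_range_succ', sum_range_succ', Nat.add_div_right k two_pos, sum_range_succ']
    simp only [mul_zero, zero_add]
    omega

end Antitone

theorem one_div_four_add_mul_sub_one_le {k : ℝ} (hk : 2 ≤ k) (x : ℝ) :
    (1 / 4 + 1 / (8 * k - 12)) * x - 1 ≤ (k - 1) * (x - 1) / (4 * k - 6) := by
  have hpos : 0 < 4 * k - 6 := by linarith
  have hcoeff : 1 / 4 + 1 / (8 * k - 12) = (k - 1) / (4 * k - 6) := by
    rw [show 8 * k - 12 = 2 * (4 * k - 6) by ring]
    field_simp
    ring
  have hle : (k - 1) / (4 * k - 6) ≤ 1 := (div_le_one hpos).2 (by linarith)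
  rw [hcoeff, mul_div_right_comm]
  linarith

section Spider

variable {V : Type*} [Fintype V] {G : SimpleGraph V} [DecidableRel G.Adj] {v : V} {k : ℕ}

theorem IsSpider.exists_antitone_legLengths (hS : IsSpider G v k) (hk : 2 ≤ k) :
    ∃ l : ℕ → ℕ, Antitone l ∧ Fintype.card V ≤ 1 + ∑ j ∈ range k, l j ∧
      l 0 + l 1 ≤ 2 * homNumber G ∧ ∑ t ∈ range (k / 2), l (2 * t + 1) ≤ homNumber G := by
  obtain ⟨hG, rfl, hdeg⟩ := hS
  obtain ⟨e, he, hl⟩ := exists_bijOn_Iio_card_antitone (G.neighborFinset v) (legLength G v)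
    (a₀ := v) fun a _ => legLength_self.trans_le (Nat.zero_le _)
  rw [G.card_neighborFinset_eq_degree] at he
  have hadj : ∀ {j}, j < G.degree v → G.Adj v (e j) := fun hj =>
    (G.mem_neighborFinset v _).1 (he.mapsTo hj)
  have hne : ∀ {i j}, i < G.degree v → j < G.degree v → i ≠ j → e i ≠ e j := fun hi hj =>
    mt (he.injOn hi hj)
  refine ⟨legLength G v ∘ e, hl, ?_, ?_, ?_⟩
  · have hsum : ∑ j ∈ range (G.degree v), legLength G v (e j) =
        ∑ a ∈ G.neighborFinset v, legLength G v a :=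
      sum_nbij e (fun j hj => he.mapsTo (mem_range.1 hj)) (by simpa using he.injOn)
        (by simpa using he.surjOn) fun _ _ => rfl
    exact hsum ▸ card_le_one_add_sum_legLength hG.connected hdeg
  · exact legLength_add_legLength_le hG (hadj (by omega)) (hadj (by omega))
      (hne (by omega) (by omega) zero_ne_one)
  · rw [← Fin.sum_univ_eq_sum_range fun t => (legLength G v ∘ e) (2 * t + 1)]
    refine sum_legLength_le_homNumber hG (x := fun t : Fin (G.degree v / 2) => e (2 * t))
      (y := fun t => e (2 * t + 1)) (fun t => hadj (by omega)) (fun t => hadj (by omega)) ?_ ?_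
      (fun s t => hne (by omega) (by omega) (by omega)) fun t => hl (Nat.le_succ _)
    · exact fun s t hst => by_contra fun h => hne (by omega) (by omega) (by omega) hst
    · exact fun s t hst => by_contra fun h => hne (by omega) (by omega) (by omega) hst

theorem IsSpider.le_homNumber (hS : IsSpider G v k) (hk : 2 ≤ k) :
    ((k : ℝ) - 1) * (Fintype.card V - 1) / (4 * k - 6) ≤ homNumber G := by
  obtain ⟨l, hl, hcard, hlong, hodd⟩ := hS.exists_antitone_legLengths hk
  obtain ⟨q, rfl⟩ : ∃ q, k = q + 2 := ⟨k - 2, by omega⟩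
  have hpaired : (Fintype.card V : ℝ) ≤ 1 + l 0 + 2 * homNumber G := by
    have := sum_range_le_add_two_mul_sum_odd hl (q + 2)
    exact_mod_cast (by omega : Fintype.card V ≤ 1 + l 0 + 2 * homNumber G)
  have hlongest : (Fintype.card V : ℝ) ≤ 1 + l 0 + (q + 1) * l 1 := by
    have : ∑ j ∈ range (q + 2), l j ≤ l 0 + (q + 1) * l 1 := sum_range_succ_le_add_mul hl (q + 1)
    exact_mod_cast (by omega : Fintype.card V ≤ 1 + l 0 + (q + 1) * l 1)
  have hlong' : (l 0 : ℝ) + l 1 ≤ 2 * homNumber G := by exact_mod_cast hlong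
  push_cast
  rw [div_le_iff₀ (by linarith)]
  -- The weights `q` and `1` give `l 0` and `l 1` equal coefficients, so that `hlong'` removes both.
  linear_combination (q : ℝ) * hpaired + hlongest + ((q : ℝ) + 1) * hlong'

end Spider

theorem stmt10_general {V : Type*} [Fintype V] (G : SimpleGraph V) [DecidableRel G.Adj] (v : V)
    (k : ℕ) (hk : 2 ≤ k) (hS : IsSpider G v k) (n : ℕ) (hn : Fintype.card V = n) :
    ((k : ℝ) - 1) * ((n : ℝ) - 1) / (4 * (k : ℝ) - 6) ≤ homNumber G ∧
      ((1 / 4 : ℝ) + 1 / (8 * (k : ℝ) - 12)) * (n : ℝ) - 1 ≤ homNumber G := by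
  subst hn
  have hmain := hS.le_homNumber hk
  exact ⟨hmain, (one_div_four_add_mul_sub_one_le (by exact_mod_cast hk) _).trans hmain⟩

/-- For every `k ≥ 5` and every spider `T` on `n` vertices with exactly `k` legs,
`h(T) ≥ (k − 1)(n − 1)/(4k − 6)`; in particular `h(T) ≥ (1/4 + 1/(8k − 12))·n − 1`. -/
theorem stmt10 {V : Type*} [Fintype V] (G : SimpleGraph V) [DecidableRel G.Adj] (v : V)
    (k : ℕ) (hk : 5 ≤ k) (hS : IsSpider G v k) (n : ℕ) (hn : Fintype.card V = n) :
    ((k : ℝ) - 1) * ((n : ℝ) - 1) / (4 * (k : ℝ) - 6) ≤ homNumber G ∧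
      ((1 / 4 : ℝ) + 1 / (8 * (k : ℝ) - 12)) * (n : ℝ) - 1 ≤ homNumber G :=
  stmt10_general G v k (by omega) hS n hn
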